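/- Let H > 0 and f : ℝ → ℝ be continuous with f(0) = 0 and F(s) = ∫₀ˢ f(σ) dσ ≥ 0 for all s ∈ ℝ. Let φ : [0,∞)×ℝ³ → ℝ be a global C² solution of ∂ₜ²φ + 3H∂ₜφ − e^{−2Ht}Δφ + f(φ) = 0 which is radial in x and such that for each t the function x ↦ φ(t,x) is compactly supported. Then the energy decays to zero outside the forward light cone: for every b > 1, lim_{t→∞} ∫_{{x ∈ ℝ³ : |x| > (1+b)t}} ( (∂ₜφ(t,x))²/2 + |∇ₓφ(t,x)|²/(2e^{2Ht}) + F(φ(t,x)) ) dx = 0. -/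

import Mathlib

open MeasureTheory Filter

noncomputable section

/-- Euclidean space `ℝ³`. -/
abbrev E3 : Type := EuclideanSpace ℝ (Fin 3)

/-- The Laplacian of a function on `ℝ³`, as the sum of second partial derivatives. -/
def lap (u : E3 → ℝ) (x : E3) : ℝ :=
  ∑ i : Fin 3,
    fderiv ℝ (fun y => fderiv ℝ u y (EuclideanSpace.single i 1)) x (EuclideanSpace.single i 1)

/-- First time derivative `∂ₜφ`. -/
def dt1 (φ : ℝ → E3 → ℝ) (t : ℝ) (x : E3) : ℝ := deriv (fun s => φ s x) t

/-- Second time derivative `∂ₜ²φ`. -/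
def dt2 (φ : ℝ → E3 → ℝ) (t : ℝ) (x : E3) : ℝ := deriv (fun s => dt1 φ s x) t

/-- The potential `F(s) = ∫₀ˢ f(σ) dσ`. -/
def pot (f : ℝ → ℝ) (s : ℝ) : ℝ := ∫ σ in (0:ℝ)..s, f σ

/-!
The solution has finite speed of propagation. Weight the energy density by a smooth function `ψ`
supported in a backward cone of speed `v ≥ c`, where `c(t) = e^{-Ht}` is the wave speed, with
`∂ₜψ ≤ -v ‖∇ψ‖`. In the time derivative of the weighted energy, the damping and the decay of `c`
contribute with a favourable sign, and the flux through the cone is absorbed by `∂ₜψ` because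
`c |∂ₜφ| ‖∇φ‖` is at most the energy density. Hence if the energy density vanishes at the base of
a backward cone, it vanishes in the whole cone.

To start the argument one needs a time around which the supports are uniformly bounded, since
compact support of each `φ(t, ·)` allows their radii to be locally unbounded in `t`. The Baire
category theorem provides one. From that time on the support spreads with speed at most
`c(0) = 1 < 1 + b`, so for large `t` the energy density is identically zero on `|x| > (1 + b) t`.
-/

open InnerProductSpace Function Set
open scoped Gradient Topology RealInnerProductSpace Laplacian

section TimeSlices

variable {E F : Type*} [NormedAddCommGroup E] [NormedSpace ℝ E]
  [NormedAddCommGroup F] [NormedSpace ℝ F] {φ : ℝ → E → F} {t : ℝ} {x : E}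

/-- The time derivative `∂ₜφ` of a field on `ℝ × E` with values in a normed space, given in curried
form; for real-valued fields on `ℝ³` it unfolds to `dt1`. -/
def timeDeriv (φ : ℝ → E → F) (t : ℝ) (x : E) : F := deriv (fun s => φ s x) t

lemma hasFDerivAt_spaceSlice (hφ : DifferentiableAt ℝ (uncurry φ) (t, x)) :
    HasFDerivAt (φ t) (fderiv ℝ (uncurry φ) (t, x) ∘L .inr ℝ ℝ E) x :=
  hφ.hasFDerivAt.comp x (hasFDerivAt_prodMk_right t x)

lemma contDiff_spaceSlice {n : WithTop ℕ∞} (hφ : ContDiff ℝ n (uncurry φ)) (t : ℝ) :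
    ContDiff ℝ n (φ t) :=
  hφ.comp (contDiff_prodMk_right t)

lemma hasDerivAt_timeSlice (hφ : DifferentiableAt ℝ (uncurry φ) (t, x)) :
    HasDerivAt (fun s => φ s x) (fderiv ℝ (uncurry φ) (t, x) (1, 0)) t :=
  hφ.hasFDerivAt.comp_hasDerivAt (f := fun s => (s, x)) t
    ((hasDerivAt_id t).prodMk (hasDerivAt_const t x))

lemma hasDerivAt_timeDeriv (hφ : DifferentiableAt ℝ (uncurry φ) (t, x)) :
    HasDerivAt (fun s => φ s x) (timeDeriv φ t x) t :=
  (hasDerivAt_timeSlice hφ).differentiableAt.hasDerivAt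

lemma uncurry_timeDeriv (hφ : Differentiable ℝ (uncurry φ)) :
    uncurry (timeDeriv φ) = fun z => fderiv ℝ (uncurry φ) z (1, 0) :=
  funext fun z => (hasDerivAt_timeSlice (hφ z)).deriv

lemma contDiff_timeDeriv {m n : WithTop ℕ∞} (hφ : ContDiff ℝ n (uncurry φ)) (hmn : m + 1 ≤ n) :
    ContDiff ℝ m (uncurry (timeDeriv φ)) := by
  rw [uncurry_timeDeriv (hφ.differentiable (by rintro rfl; simp at hmn))]
  exact (hφ.fderiv_right hmn).clm_apply contDiff_const

end TimeSlices

section SecondDerivative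

lemma fderiv_fderiv_apply {V W : Type*} [NormedAddCommGroup V] [NormedSpace ℝ V]
    [NormedAddCommGroup W] [NormedSpace ℝ W] {u : V → W} (hu : ContDiff ℝ 2 u) (x v w : V) :
    fderiv ℝ (fun y => fderiv ℝ u y v) x w = fderiv ℝ (fderiv ℝ u) x w v := by
  have hdu : DifferentiableAt ℝ (fderiv ℝ u) x :=
    (hu.fderiv_right (m := 1) one_add_one_eq_two.le).differentiable one_ne_zero x
  simp [fderiv_clm_apply hdu (differentiableAt_const v)]

end SecondDerivative

section Gradient

variable {E : Type*} [NormedAddCommGroup E] [InnerProductSpace ℝ E] [CompleteSpace E]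

lemma gradient_mul {u w : E → ℝ} {x : E} (hu : DifferentiableAt ℝ u x)
    (hw : DifferentiableAt ℝ w x) :
    ∇ (fun y => u y * w y) x = u x • ∇ w x + w x • ∇ u x := by
  simp only [gradient, fderiv_fun_mul hu hw, map_add, map_smul]

lemma continuous_gradient {u : E → ℝ} (hu : ContDiff ℝ 1 u) : Continuous (∇ u) :=
  (toDual ℝ E).symm.continuous.comp (hu.continuous_fderiv one_ne_zero)

lemma contDiff_gradient_spaceSlice {φ : ℝ → E → ℝ} {m n : WithTop ℕ∞}
    (hφ : ContDiff ℝ n (uncurry φ)) (hmn : m + 1 ≤ n) :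
    ContDiff ℝ m (uncurry fun t => ∇ (φ t)) := by
  have hdiff : Differentiable ℝ (uncurry φ) :=
    hφ.differentiable (by rintro rfl; simp at hmn)
  have heq : uncurry (fun t => ∇ (φ t)) =
      fun z => (toDual ℝ E).symm (fderiv ℝ (uncurry φ) z ∘L .inr ℝ ℝ E) :=
    funext fun z => congrArg _ (hasFDerivAt_spaceSlice (hdiff z)).fderiv
  exact heq ▸ (toDual ℝ E).symm.contDiff.comp
    ((hφ.fderiv_right hmn).clm_comp contDiff_const)

lemma hasDerivAt_gradient_spaceSlice {φ : ℝ → E → ℝ} (hφ : ContDiff ℝ 2 (uncurry φ))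
    (t : ℝ) (x : E) :
    HasDerivAt (fun s => ∇ (φ s) x) (∇ (timeDeriv φ t) x) t := by
  have hgrad := (contDiff_gradient_spaceSlice hφ one_add_one_eq_two.le).differentiable
    one_ne_zero (t, x)
  have hdiff : Differentiable ℝ (uncurry φ) := hφ.differentiable two_ne_zero
  refine (hasDerivAt_timeDeriv hgrad).congr_deriv (ext_inner_right ℝ fun v => ?_)
  let partialDeriv (s : ℝ) (y : E) : ℝ := fderiv ℝ (uncurry φ) (s, y) (0, v)
  have hpartial : DifferentiableAt ℝ (uncurry partialDeriv) (t, x) :=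
    ((hφ.fderiv_right one_add_one_eq_two.le).clm_apply contDiff_const).differentiable
      one_ne_zero _
  have hinner (s : ℝ) : ⟪∇ (φ s) x, v⟫ = partialDeriv s x := by
    simp [inner_gradient_left, (hasFDerivAt_spaceSlice (hdiff (s, x))).fderiv, partialDeriv]
  have hslice := (hasDerivAt_timeDeriv hgrad).inner ℝ (hasDerivAt_const t v)
  simp only [hinner, inner_zero_right, zero_add] at hslice
  calc ⟪timeDeriv (fun s => ∇ (φ s)) t x, v⟫
      = fderiv ℝ (uncurry partialDeriv) (t, x) (1, 0) :=
        hslice.unique (hasDerivAt_timeSlice hpartial)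
    _ = fderiv ℝ (fderiv ℝ (uncurry φ)) (t, x) (1, 0) (0, v) :=
        fderiv_fderiv_apply hφ _ _ _
    _ = fderiv ℝ (fderiv ℝ (uncurry φ)) (t, x) (0, v) (1, 0) :=
        (hφ.contDiffAt.isSymmSndFDerivAt (by simp)).eq _ _
    _ = fderiv ℝ (uncurry (timeDeriv φ)) (t, x) (0, v) := by
        rw [uncurry_timeDeriv hdiff, fderiv_fderiv_apply hφ]
    _ = ⟪∇ (timeDeriv φ t) x, v⟫ := by
        have hdt := (contDiff_timeDeriv hφ one_add_one_eq_two.le).differentiable one_ne_zero (t, x)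
        simp [inner_gradient_left, (hasFDerivAt_spaceSlice hdt).fderiv]

end Gradient

section Laplacian

variable {E : Type*} [NormedAddCommGroup E] [InnerProductSpace ℝ E] [FiniteDimensional ℝ E]

lemma laplacian_eq_sum_fderiv_fderiv {ι : Type*} [Fintype ι]
    (e : OrthonormalBasis ι ℝ E) {u : E → ℝ} (hu : ContDiff ℝ 2 u) (x : E) :
    Δ u x = ∑ i, fderiv ℝ (fun y => fderiv ℝ u y (e i)) x (e i) := by
  simp [laplacian_eq_iteratedFDeriv_orthonormalBasis u e, iteratedFDeriv_two_apply,
    fderiv_fderiv_apply hu]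

lemma lap_eq_laplacian {u : E3 → ℝ} (hu : ContDiff ℝ 2 u) (x : E3) : lap u x = Δ u x := by
  simp [lap, laplacian_eq_sum_fderiv_fderiv (EuclideanSpace.basisFun (Fin 3) ℝ) hu]

lemma continuous_laplacian {u : E → ℝ} (hu : ContDiff ℝ 2 u) :
    Continuous (Δ u) := by
  have hpartial (v : E) : ContDiff ℝ 1 (fun y => fderiv ℝ u y v) :=
    (hu.fderiv_right one_add_one_eq_two.le).clm_apply contDiff_const
  simp_rw [funext (laplacian_eq_sum_fderiv_fderiv (stdOrthonormalBasis ℝ E) hu)]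
  exact continuous_finsetSum _ fun i _ =>
    ((hpartial _).continuous_fderiv one_ne_zero).clm_apply continuous_const

variable [MeasurableSpace E] [BorelSpace E] {μ : Measure E} {g u : E → ℝ}

lemma integrable_mul_laplacian [IsFiniteMeasureOnCompacts μ] (hg : Continuous g)
    (hg_supp : HasCompactSupport g) (hu : ContDiff ℝ 2 u) :
    Integrable (fun x => g x * Δ u x) μ :=
  (hg.mul (continuous_laplacian hu)).integrable_of_hasCompactSupport hg_supp.mul_right

lemma integrable_inner_gradient_gradient [IsFiniteMeasureOnCompacts μ] (hg : ContDiff ℝ 1 g)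
    (hg_supp : HasCompactSupport g) (hu : ContDiff ℝ 1 u) :
    Integrable (fun x => ⟪∇ g x, ∇ u x⟫) μ :=
  ((continuous_gradient hg).inner (continuous_gradient hu)).integrable_of_hasCompactSupport
    ((hg_supp.fderiv ℝ).mono fun x hx hzero => hx (by simp [gradient, hzero]))

lemma integral_mul_laplacian [μ.IsAddHaarMeasure] (hg : ContDiff ℝ 1 g)
    (hg_supp : HasCompactSupport g) (hu : ContDiff ℝ 2 u) :
    ∫ x, g x * Δ u x ∂μ = -∫ x, ⟪∇ g x, ∇ u x⟫ ∂μ := by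
  let e := stdOrthonormalBasis ℝ E
  have hcont_g (i) : Continuous fun x => fderiv ℝ g x (e i) :=
    (hg.continuous_fderiv one_ne_zero).clm_apply continuous_const
  have hpartial (i) : ContDiff ℝ 1 fun y => fderiv ℝ u y (e i) :=
    (hu.fderiv_right one_add_one_eq_two.le).clm_apply contDiff_const
  have hint_right (i) :
      Integrable (fun x => g x * fderiv ℝ (fun y => fderiv ℝ u y (e i)) x (e i)) μ :=
    (hg.continuous.mul <| ((hpartial i).continuous_fderiv one_ne_zero).clm_apply
      continuous_const).integrable_of_hasCompactSupport hg_supp.mul_right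
  have hint_left (i) : Integrable (fun x => fderiv ℝ g x (e i) * fderiv ℝ u x (e i)) μ :=
    ((hcont_g i).mul (hpartial i).continuous).integrable_of_hasCompactSupport
      (hg_supp.fderiv_apply ℝ (e i)).mul_right
  have hinner (x) : ⟪∇ g x, ∇ u x⟫ = ∑ i, fderiv ℝ g x (e i) * fderiv ℝ u x (e i) := by
    rw [← e.sum_inner_mul_inner]
    simp only [inner_gradient_left, inner_gradient_right, conj_trivial]
  simp_rw [hinner, laplacian_eq_sum_fderiv_fderiv e hu, Finset.mul_sum]
  rw [integral_finsetSum _ fun i _ => hint_right i, integral_finsetSum _ fun i _ => hint_left i,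
    ← Finset.sum_neg_distrib]
  refine Finset.sum_congr rfl fun i _ => ?_
  exact integral_mul_fderiv_eq_neg_fderiv_mul_of_integrable (hint_left i) (hint_right i)
    ((hg.continuous.mul (hpartial i).continuous).integrable_of_hasCompactSupport hg_supp.mul_right)
    (fun x _ => hg.differentiable one_ne_zero x)
    (fun x _ => (hpartial i).differentiable one_ne_zero x)

end Laplacian

section ParametricIntegral

variable {E F : Type*} [NormedAddCommGroup E] [NormedSpace ℝ E] [MeasurableSpace E]
  [OpensMeasurableSpace E] [NormedAddCommGroup F] [NormedSpace ℝ F]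
  [SecondCountableTopologyEither E F]

lemma hasDerivAt_integral_of_locally_uniform_support {μ : Measure E} [IsFiniteMeasureOnCompacts μ]
    {g : ℝ → E → F} (hg : ContDiff ℝ 1 (uncurry g)) {K : Set E} (hK : IsCompact K) {t : ℝ}
    (hgK : ∀ᶠ s in 𝓝 t, ∀ x ∉ K, g s x = 0) :
    HasDerivAt (fun s => ∫ x, g s x ∂μ) (∫ x, timeDeriv g t x ∂μ) t := by
  have hdt : Continuous (uncurry (timeDeriv g)) :=
    (contDiff_timeDeriv hg (zero_add 1).le).continuous
  obtain ⟨C, hC⟩ := ((isCompact_Icc (a := t - 1) (b := t + 1)).prod hK).exists_bound_of_continuousOn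
    hdt.continuousOn
  obtain ⟨U, hU, hU_open, htU⟩ := eventually_nhds_iff.1
    (hgK.and (Icc_mem_nhds (sub_one_lt t) (lt_add_one t)))
  have hbound (x : E) (s : ℝ) (hs : s ∈ U) : ‖timeDeriv g s x‖ ≤ K.indicator (fun _ => C) x := by
    by_cases hx : x ∈ K
    · simpa [hx] using hC (s, x) ⟨(hU s hs).2, hx⟩
    · have hzero : (fun r => g r x) =ᶠ[𝓝 s] fun _ => 0 := by
        filter_upwards [hU_open.mem_nhds hs] with r hr using (hU r hr).1 x hx
      simp [hx, timeDeriv, hzero.deriv_eq]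
  refine (hasDerivAt_integral_of_dominated_loc_of_deriv_le (bound := K.indicator fun _ => C)
    (F' := timeDeriv g) (hU_open.mem_nhds htU) (.of_forall fun s => ?_) ?_ ?_
    (.of_forall hbound) ?_ (.of_forall fun x s _ => ?_)).2
  · exact (hg.continuous.uncurry_left s).aestronglyMeasurable
  · exact (hg.continuous.uncurry_left t).integrable_of_hasCompactSupport
      (.intro hK (hgK.self_of_nhds))
  · exact (hdt.uncurry_left t).aestronglyMeasurable
  · exact (integrable_indicator_iff hK.measurableSet).2
      (integrableOn_const hK.measure_lt_top.ne)
  · exact hasDerivAt_timeDeriv (hg.differentiable one_ne_zero (s, x))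

end ParametricIntegral

section Baire

lemma dense_setOf_eventually_uniform_support {X E Y : Type*} [TopologicalSpace X] [BaireSpace X]
    [SeminormedAddCommGroup E] [TopologicalSpace Y] [T1Space Y] [Zero Y] {φ : X → E → Y}
    (hφ : ∀ x, Continuous fun t => φ t x) (hsupp : ∀ t, HasCompactSupport (φ t)) :
    Dense {t | ∃ R : ℝ, ∀ᶠ s in 𝓝 t, ∀ x, R < ‖x‖ → φ s x = 0} := by
  let supportedInBall (n : ℕ) : Set X := {t | ∀ x, (n : ℝ) < ‖x‖ → φ t x = 0}
  have hclosed (n : ℕ) : IsClosed (supportedInBall n) := by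
    simp only [supportedInBall, ofPred_forall]
    exact isClosed_iInter fun x => isClosed_iInter fun _ => isClosed_singleton.preimage (hφ x)
  have hcover : ⋃ n, supportedInBall n = univ := by
    refine eq_univ_of_forall fun t => ?_
    obtain ⟨r, hr⟩ := (hsupp t).isCompact.isBounded.exists_norm_le
    obtain ⟨n, hn⟩ := exists_nat_ge r
    exact mem_iUnion.2 ⟨n, fun x hx => image_eq_zero_of_notMem_tsupport fun hxs =>
      ((hr x hxs).trans hn).not_gt hx⟩
  refine (dense_iUnion_interior_of_closed hclosed hcover).mono (iUnion_subset fun n t ht => ?_)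
  exact ⟨n, mem_interior_iff_mem_nhds.1 ht⟩

end Baire

section Potential

lemma hasDerivAt_pot {f : ℝ → ℝ} (hf : Continuous f) (s : ℝ) : HasDerivAt (pot f) (f s) s :=
  hf.integral_hasStrictDerivAt 0 s |>.hasDerivAt

lemma contDiff_pot {f : ℝ → ℝ} (hf : Continuous f) : ContDiff ℝ 1 (pot f) :=
  contDiff_one_iff_deriv.2 ⟨fun s => (hasDerivAt_pot hf s).differentiableAt,
    hf.congr fun s => (hasDerivAt_pot hf s).deriv.symm⟩

end Potential

section ConeWeight

variable {E : Type*} [NormedAddCommGroup E] {v τ t : ℝ} {x₀ x : E}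

/-- A smooth weight, positive inside the double cone `‖x - x₀‖ < |v * (τ - t)|` of speed `|v|`
with apex `(τ, x₀)` and zero elsewhere. -/
def coneWeight (v τ : ℝ) (x₀ : E) (t : ℝ) (x : E) : ℝ :=
  expNegInvGlue ((v * (τ - t)) ^ 2 - ‖x - x₀‖ ^ 2)

lemma coneWeight_nonneg : 0 ≤ coneWeight v τ x₀ t x := expNegInvGlue.nonneg _

lemma coneWeight_pos (hx : ‖x - x₀‖ < v * (τ - t)) : 0 < coneWeight v τ x₀ t x :=
  expNegInvGlue.pos_of_pos (sub_pos.2 (by gcongr))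

lemma coneWeight_eq_zero (hx : |v * (τ - t)| ≤ ‖x - x₀‖) : coneWeight v τ x₀ t x = 0 :=
  expNegInvGlue.zero_of_nonpos (sub_nonpos.2 (sq_le_sq.2 (by rwa [abs_norm])))

lemma eventually_coneWeight_eq_zero :
    ∀ᶠ s in 𝓝 t, ∀ x ∉ Metric.closedBall x₀ (|v * (τ - t)| + 1), coneWeight v τ x₀ s x = 0 := by
  have hradius : Continuous fun s => |v * (τ - s)| := by fun_prop
  filter_upwards [hradius.continuousAt.eventually_lt continuousAt_const
    (lt_add_one |v * (τ - t)|)] with s hs x hx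
  rw [Metric.mem_closedBall, dist_eq_norm, not_le] at hx
  exact coneWeight_eq_zero (hs.trans hx).le

lemma deriv_expNegInvGlue_eq_zero {s : ℝ} (hs : s < 0) : deriv expNegInvGlue s = 0 := by
  have hzero : expNegInvGlue =ᶠ[𝓝 s] fun _ => 0 := by
    filter_upwards [Iio_mem_nhds hs] with r hr using expNegInvGlue.zero_of_nonpos hr.le
  simp [hzero.deriv_eq]

lemma timeDeriv_coneWeight : timeDeriv (coneWeight v τ x₀) t x =
    -(2 * v * (v * (τ - t)) * deriv expNegInvGlue ((v * (τ - t)) ^ 2 - ‖x - x₀‖ ^ 2)) := by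
  have hglue := (expNegInvGlue.contDiff.differentiable one_ne_zero).differentiableAt
    (x := (v * (τ - t)) ^ 2 - ‖x - x₀‖ ^ 2) |>.hasDerivAt
  have hradius : HasDerivAt (fun s => (v * (τ - s)) ^ 2 - ‖x - x₀‖ ^ 2)
      (2 * (v * (τ - t)) * (v * -1)) t := by
    simpa using ((((hasDerivAt_id t).const_sub τ).const_mul v).fun_pow 2).sub_const (‖x - x₀‖ ^ 2)
  exact ((hglue.comp t hradius).congr_deriv (by ring)).deriv

variable [InnerProductSpace ℝ E]

lemma contDiff_coneWeight {n : ℕ∞} : ContDiff ℝ n (uncurry (coneWeight v τ x₀)) := by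
  have hnorm : ContDiff ℝ n fun z : ℝ × E => ‖z.2 - x₀‖ ^ 2 :=
    (contDiff_snd.sub contDiff_const).norm_sq ℝ
  exact expNegInvGlue.contDiff.comp (ContDiff.sub (by fun_prop) hnorm)

lemma gradient_coneWeight [CompleteSpace E] : ∇ (coneWeight v τ x₀ t) x =
    -(2 * deriv expNegInvGlue ((v * (τ - t)) ^ 2 - ‖x - x₀‖ ^ 2)) • (x - x₀) := by
  have hglue := (expNegInvGlue.contDiff.differentiable one_ne_zero).differentiableAt
    (x := (v * (τ - t)) ^ 2 - ‖x - x₀‖ ^ 2) |>.hasDerivAt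
  have hnorm : HasFDerivAt (fun y : E => ‖y - x₀‖ ^ 2) (2 • innerSL ℝ (x - x₀)) x := by
    simpa using ((hasFDerivAt_id x).sub_const x₀).norm_sq
  refine HasGradientAt.gradient (hasGradientAt_iff_hasFDerivAt.2 ?_)
  refine (hglue.comp_hasFDerivAt x (hnorm.const_sub ((v * (τ - t)) ^ 2))).congr_fderiv ?_
  ext y
  simp only [map_sub, smul_neg, neg_apply, smul_apply, sub_apply, coe_innerSL_apply,
    nsmul_eq_mul, Nat.cast_ofNat, smul_eq_mul, neg_smul, map_neg, map_smul, toDual_apply_apply,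
    neg_inj]
  ring

lemma timeDeriv_coneWeight_le [CompleteSpace E] (hv : 0 ≤ v) (ht : t ≤ τ) :
    timeDeriv (coneWeight v τ x₀) t x ≤ -(v * ‖∇ (coneWeight v τ x₀ t) x‖) := by
  set κ := deriv expNegInvGlue ((v * (τ - t)) ^ 2 - ‖x - x₀‖ ^ 2) with hκ
  have hκ_nonneg : 0 ≤ κ := expNegInvGlue.monotone.deriv_nonneg
  have hradius : 0 ≤ v * (τ - t) := mul_nonneg hv (sub_nonneg.2 ht)
  have hinside : κ * ‖x - x₀‖ ≤ κ * (v * (τ - t)) := by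
    rcases le_or_gt ‖x - x₀‖ (v * (τ - t)) with hle | hlt
    · gcongr
    · have : κ = 0 :=
        deriv_expNegInvGlue_eq_zero (sub_neg.2 (pow_lt_pow_left₀ hlt hradius two_ne_zero))
      simp [this]
  rw [timeDeriv_coneWeight, gradient_coneWeight, ← hκ, norm_smul, norm_neg, Real.norm_eq_abs,
    abs_of_nonneg (by positivity)]
  linarith [mul_le_mul_of_nonneg_left hinside hv]

end ConeWeight

section Energy

variable {E : Type*} [NormedAddCommGroup E] [InnerProductSpace ℝ E] [CompleteSpace E]
  {c f : ℝ → ℝ} {φ : ℝ → E → ℝ}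

/-- The energy density of a field `φ` propagating with time-dependent speed `c` in the potential
`pot f`. -/
def energyDensity (c f : ℝ → ℝ) (φ : ℝ → E → ℝ) (t : ℝ) (x : E) : ℝ :=
  timeDeriv φ t x ^ 2 / 2 + c t ^ 2 * ‖∇ (φ t) x‖ ^ 2 / 2 + pot f (φ t x)

lemma half_sq_add_half_sq_le_energyDensity (hF : ∀ s, 0 ≤ pot f s) (t : ℝ) (x : E) :
    timeDeriv φ t x ^ 2 / 2 + c t ^ 2 * ‖∇ (φ t) x‖ ^ 2 / 2 ≤ energyDensity c f φ t x :=
  le_add_of_nonneg_right (hF _)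

lemma energyDensity_nonneg (hF : ∀ s, 0 ≤ pot f s) (t : ℝ) (x : E) :
    0 ≤ energyDensity c f φ t x :=
  (half_sq_add_half_sq_le_energyDensity hF t x).trans' (by positivity)

lemma energyDensity_eq_zero_of_eventuallyEq_zero {t : ℝ} {x : E}
    (hφ : uncurry φ =ᶠ[𝓝 (t, x)] 0) : energyDensity c f φ t x = 0 := by
  have htime : (fun s => φ s x) =ᶠ[𝓝 t] fun _ => 0 :=
    (Continuous.prodMk_left x).continuousAt.eventually hφ
  have hspace : φ t =ᶠ[𝓝 x] fun _ => 0 :=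
    (Continuous.prodMk_right t).continuousAt.eventually hφ
  simp [energyDensity, timeDeriv, gradient, htime.deriv_eq, hspace.fderiv_eq, hspace.eq_of_nhds,
    pot]

lemma contDiff_energyDensity (hc : ContDiff ℝ 1 c) (hf : Continuous f)
    (hφ : ContDiff ℝ 2 (uncurry φ)) : ContDiff ℝ 1 (uncurry (energyDensity c f φ)) := by
  have hdt := contDiff_timeDeriv hφ one_add_one_eq_two.le
  have hgrad := contDiff_gradient_spaceSlice hφ one_add_one_eq_two.le
  have hpot : ContDiff ℝ 1 (pot f ∘ uncurry φ) :=
    (contDiff_pot hf).comp (hφ.of_le one_le_two)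
  exact (((hdt.pow 2).div_const 2).add
    ((((hc.comp contDiff_fst).pow 2).mul (hgrad.norm_sq ℝ)).div_const 2)).add hpot

lemma hasDerivAt_energyDensity (hc : Differentiable ℝ c) (hf : Continuous f)
    (hφ : ContDiff ℝ 2 (uncurry φ)) (t : ℝ) (x : E) :
    HasDerivAt (fun s => energyDensity c f φ s x)
      (timeDeriv φ t x * timeDeriv (timeDeriv φ) t x
        + c t ^ 2 * ⟪∇ (φ t) x, ∇ (timeDeriv φ t) x⟫
        + c t * deriv c t * ‖∇ (φ t) x‖ ^ 2 + f (φ t x) * timeDeriv φ t x) t := by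
  have hdt := hasDerivAt_timeDeriv
    ((contDiff_timeDeriv hφ one_add_one_eq_two.le).differentiable one_ne_zero (t, x))
  have hgrad := (hasDerivAt_gradient_spaceSlice hφ t x).norm_sq
  have hpot := (hasDerivAt_pot hf (φ t x)).comp t
    (hasDerivAt_timeDeriv (hφ.differentiable two_ne_zero (t, x)))
  refine ((((hdt.fun_pow 2).div_const 2).fun_add
    ((((hc t).hasDerivAt.fun_pow 2).fun_mul hgrad).div_const 2)).fun_add hpot).congr_deriv ?_
  push_cast
  ring

lemma sq_mul_neg_timeDeriv_mul_inner_le_energyDensity {v ψt : ℝ} {p : E} {t : ℝ} {x : E}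
    (hF : ∀ s, 0 ≤ pot f s) (hct : 0 ≤ c t) (hcv : c t ≤ v) (hψt : ψt ≤ -(v * ‖p‖)) :
    c t ^ 2 * -(timeDeriv φ t x * ⟪p, ∇ (φ t) x⟫) ≤ -(ψt * energyDensity c f φ t x) := by
  have henergy : c t * (|timeDeriv φ t x| * ‖∇ (φ t) x‖) ≤ energyDensity c f φ t x := by
    refine (half_sq_add_half_sq_le_energyDensity hF t x).trans' ?_
    rw [← sq_abs (timeDeriv φ t x)]
    linarith [two_mul_le_add_sq |timeDeriv φ t x| (c t * ‖∇ (φ t) x‖)]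
  have hcauchy : -(timeDeriv φ t x * ⟪p, ∇ (φ t) x⟫) ≤
      |timeDeriv φ t x| * (‖p‖ * ‖∇ (φ t) x‖) :=
    calc -(timeDeriv φ t x * ⟪p, ∇ (φ t) x⟫)
        ≤ |timeDeriv φ t x| * |⟪p, ∇ (φ t) x⟫| := by
          rw [← abs_mul]; exact neg_le_abs _
      _ ≤ |timeDeriv φ t x| * (‖p‖ * ‖∇ (φ t) x‖) := by
          gcongr; exact abs_real_inner_le_norm _ _
  have he := energyDensity_nonneg (c := c) (φ := φ) hF t x
  have hv : 0 ≤ v := hct.trans hcv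
  calc c t ^ 2 * -(timeDeriv φ t x * ⟪p, ∇ (φ t) x⟫)
      ≤ c t ^ 2 * (|timeDeriv φ t x| * (‖p‖ * ‖∇ (φ t) x‖)) := by gcongr
    _ = c t * ‖p‖ * (c t * (|timeDeriv φ t x| * ‖∇ (φ t) x‖)) := by ring
    _ ≤ v * ‖p‖ * energyDensity c f φ t x := by gcongr
    _ ≤ -ψt * energyDensity c f φ t x := by gcongr; linarith
    _ = -(ψt * energyDensity c f φ t x) := by ring

end Energy

section DampedWave

variable {E : Type*} [NormedAddCommGroup E] [InnerProductSpace ℝ E] [FiniteDimensional ℝ E]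
  {c γ f : ℝ → ℝ} {φ : ℝ → E → ℝ}

/-- `φ` solves the damped semilinear wave equation `∂ₜ²φ + γ(t) ∂ₜφ - c(t)² Δφ + f(φ) = 0` on
`[0, ∞) × E`. -/
def IsDampedWave (c γ f : ℝ → ℝ) (φ : ℝ → E → ℝ) : Prop :=
  ∀ t, 0 ≤ t → ∀ x, timeDeriv (timeDeriv φ) t x + γ t * timeDeriv φ t x - c t ^ 2 * Δ (φ t) x
    + f (φ t x) = 0

lemma timeDeriv_energyDensity (hc : Differentiable ℝ c) (hf : Continuous f)
    (hφ : ContDiff ℝ 2 (uncurry φ)) (hwave : IsDampedWave c γ f φ) {t : ℝ} (ht : 0 ≤ t) (x : E) :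
    timeDeriv (energyDensity c f φ) t x =
      c t ^ 2 * (timeDeriv φ t x * Δ (φ t) x + ⟪∇ (φ t) x, ∇ (timeDeriv φ t) x⟫)
        - γ t * timeDeriv φ t x ^ 2 + c t * deriv c t * ‖∇ (φ t) x‖ ^ 2 := by
  rw [timeDeriv, (hasDerivAt_energyDensity hc hf hφ t x).deriv]
  linear_combination timeDeriv φ t x * hwave t ht x

-- By integration by parts the right-hand side integrates to zero when `ψ t` has compact support.
lemma timeDeriv_mul_energyDensity_le {ψ : ℝ → E → ℝ} {t v : ℝ} {x : E}
    (hc : Differentiable ℝ c) (hf : Continuous f)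
    (hF : ∀ s, 0 ≤ pot f s) (hφ : ContDiff ℝ 2 (uncurry φ)) (hwave : IsDampedWave c γ f φ)
    (ht : 0 ≤ t) (hγ : 0 ≤ γ t) (hct : 0 ≤ c t) (hcv : c t ≤ v) (hc' : deriv c t ≤ 0)
    (hψ : DifferentiableAt ℝ (uncurry ψ) (t, x)) (hψ_nonneg : 0 ≤ ψ t x)
    (hψ_cone : timeDeriv ψ t x ≤ -(v * ‖∇ (ψ t) x‖)) :
    timeDeriv (fun s y => ψ s y * energyDensity c f φ s y) t x ≤
      c t ^ 2 * (ψ t x * timeDeriv φ t x * Δ (φ t) x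
        + ⟪∇ (fun y => ψ t y * timeDeriv φ t y) x, ∇ (φ t) x⟫) := by
  have henergy := (hasDerivAt_energyDensity hc hf hφ t x).differentiableAt
  have hdt : DifferentiableAt ℝ (timeDeriv φ t) x :=
    (hasFDerivAt_spaceSlice ((contDiff_timeDeriv hφ one_add_one_eq_two.le).differentiable
      one_ne_zero (t, x))).differentiableAt
  have hflux : c t ^ 2 * -(timeDeriv φ t x * ⟪∇ (ψ t) x, ∇ (φ t) x⟫) ≤
      -(timeDeriv ψ t x * energyDensity c f φ t x) :=
    sq_mul_neg_timeDeriv_mul_inner_le_energyDensity hF hct hcv hψ_cone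
  have hdamping : 0 ≤ ψ t x * (γ t * timeDeriv φ t x ^ 2) := by positivity
  have hredshift : ψ t x * (c t * deriv c t * ‖∇ (φ t) x‖ ^ 2) ≤ 0 :=
    mul_nonpos_of_nonneg_of_nonpos hψ_nonneg
      (mul_nonpos_of_nonpos_of_nonneg (mul_nonpos_of_nonneg_of_nonpos hct hc') (by positivity))
  have hprod : timeDeriv (fun s y => ψ s y * energyDensity c f φ s y) t x =
      timeDeriv ψ t x * energyDensity c f φ t x + ψ t x * timeDeriv (energyDensity c f φ) t x :=
    ((hasDerivAt_timeDeriv hψ).fun_mul henergy.hasDerivAt).deriv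
  rw [hprod, timeDeriv_energyDensity hc hf hφ hwave ht,
    gradient_mul (hasFDerivAt_spaceSlice hψ).differentiableAt hdt, inner_add_left,
    real_inner_smul_left, real_inner_smul_left, real_inner_comm]
  linarith

end DampedWave

section FinitePropagation

variable {E : Type*} [NormedAddCommGroup E] [InnerProductSpace ℝ E] [FiniteDimensional ℝ E]
  {c γ f : ℝ → ℝ} {φ : ℝ → E → ℝ}

lemma integral_timeDeriv_mul_energyDensity_nonpos [MeasurableSpace E] [BorelSpace E]
    {μ : Measure E} [μ.IsAddHaarMeasure] {ψ : ℝ → E → ℝ} {K : Set E} {t v : ℝ}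
    (hc : ContDiff ℝ 1 c) (hf : Continuous f) (hF : ∀ s, 0 ≤ pot f s)
    (hφ : ContDiff ℝ 2 (uncurry φ)) (hwave : IsDampedWave c γ f φ) (ht : 0 ≤ t)
    (hγ : 0 ≤ γ t) (hct : 0 ≤ c t) (hcv : c t ≤ v) (hc' : deriv c t ≤ 0)
    (hψ : ContDiff ℝ 1 (uncurry ψ)) (hK : IsCompact K)
    (hψK : ∀ᶠ s in 𝓝 t, ∀ x ∉ K, ψ s x = 0) (hψ_nonneg : ∀ x, 0 ≤ ψ t x)
    (hψ_cone : ∀ x, timeDeriv ψ t x ≤ -(v * ‖∇ (ψ t) x‖)) :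
    ∫ x, timeDeriv (fun s y => ψ s y * energyDensity c f φ s y) t x ∂μ ≤ 0 := by
  let χ (y : E) : ℝ := ψ t y * timeDeriv φ t y
  have hχ : ContDiff ℝ 1 χ :=
    (contDiff_spaceSlice hψ t).mul
      (contDiff_spaceSlice (contDiff_timeDeriv hφ one_add_one_eq_two.le) t)
  have hχ_supp : HasCompactSupport χ :=
    .intro hK fun x hx => by simp [χ, hψK.self_of_nhds x hx]
  have hφt : ContDiff ℝ 2 (φ t) := contDiff_spaceSlice hφ t
  have hlap := integrable_mul_laplacian (μ := μ) hχ.continuous hχ_supp hφt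
  have hinner := integrable_inner_gradient_gradient (μ := μ) hχ hχ_supp (hφt.of_le one_le_two)
  have hderiv_cont :
      Continuous (timeDeriv (fun s y => ψ s y * energyDensity c f φ s y) t) :=
    (contDiff_timeDeriv (hψ.mul (contDiff_energyDensity hc hf hφ))
      (zero_add 1).le).continuous.uncurry_left t
  have hderiv_supp :
      HasCompactSupport (timeDeriv (fun s y => ψ s y * energyDensity c f φ s y) t) := by
    refine .intro hK fun x hx => ?_
    have hzero : (fun s => ψ s x * energyDensity c f φ s x) =ᶠ[𝓝 t] fun _ => 0 := by
      filter_upwards [hψK] with s hs using by simp [hs x hx]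
    simp [timeDeriv, hzero.deriv_eq]
  calc ∫ x, timeDeriv (fun s y => ψ s y * energyDensity c f φ s y) t x ∂μ
      ≤ ∫ x, c t ^ 2 * (χ x * Δ (φ t) x + ⟪∇ χ x, ∇ (φ t) x⟫) ∂μ :=
        integral_mono (hderiv_cont.integrable_of_hasCompactSupport hderiv_supp)
          ((hlap.add hinner).const_mul _) fun x =>
          timeDeriv_mul_energyDensity_le (hc.differentiable one_ne_zero) hf hF hφ hwave ht hγ hct
            hcv hc' (hψ.differentiable one_ne_zero _) (hψ_nonneg x) (hψ_cone x)
    _ = 0 := by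
        rw [integral_const_mul, integral_add hlap hinner,
          integral_mul_laplacian hχ hχ_supp hφt, neg_add_cancel, mul_zero]

lemma antitoneOn_integral_coneWeight_mul_energyDensity [MeasurableSpace E] [BorelSpace E]
    {μ : Measure E} [μ.IsAddHaarMeasure] {t₀ τ v : ℝ}
    (hc : ContDiff ℝ 1 c) (hc_nonneg : ∀ t, 0 ≤ t → 0 ≤ c t) (hc_anti : AntitoneOn c (Ici 0))
    (hγ : ∀ t, 0 ≤ t → 0 ≤ γ t) (hf : Continuous f) (hF : ∀ s, 0 ≤ pot f s)
    (hφ : ContDiff ℝ 2 (uncurry φ)) (hwave : IsDampedWave c γ f φ)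
    (ht₀ : 0 ≤ t₀) (hcv : c t₀ ≤ v) (x₀ : E) :
    AntitoneOn (fun t => ∫ x, coneWeight v τ x₀ t x * energyDensity c f φ t x ∂μ)
      (Icc t₀ τ) := by
  let weightedDensity (t : ℝ) (x : E) : ℝ := coneWeight v τ x₀ t x * energyDensity c f φ t x
  have hsmooth : ContDiff ℝ 1 (uncurry weightedDensity) :=
    (contDiff_coneWeight (n := 1)).mul (contDiff_energyDensity hc hf hφ)
  have hderiv (t : ℝ) : HasDerivAt (fun s => ∫ x, weightedDensity s x ∂μ)
      (∫ x, timeDeriv weightedDensity t x ∂μ) t :=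
    hasDerivAt_integral_of_locally_uniform_support hsmooth
      (isCompact_closedBall x₀ (|v * (τ - t)| + 1))
      (eventually_coneWeight_eq_zero.mono fun s hs x hx => mul_eq_zero_of_left (hs x hx) _)
  refine antitoneOn_of_deriv_nonpos (convex_Icc t₀ τ)
    (fun t _ => (hderiv t).continuousAt.continuousWithinAt)
    (fun t _ => (hderiv t).differentiableAt.differentiableWithinAt) fun t ht => ?_
  rw [interior_Icc] at ht
  have ht_pos : 0 < t := ht₀.trans_lt ht.1
  have hc' : deriv c t ≤ 0 := by
    rw [← derivWithin_of_mem_nhds (Ici_mem_nhds ht_pos)]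
    exact hc_anti.derivWithin_nonpos
  have hct : c t ≤ v := (hc_anti ht₀ ht_pos.le ht.1.le).trans hcv
  have hv : 0 ≤ v := (hc_nonneg t₀ ht₀).trans hcv
  exact (hderiv t).deriv.trans_le <| integral_timeDeriv_mul_energyDensity_nonpos hc hf hF hφ hwave
    ht_pos.le (hγ t ht_pos.le) (hc_nonneg t ht_pos.le) hct hc'
    (contDiff_coneWeight (n := 1)) (isCompact_closedBall _ _) eventually_coneWeight_eq_zero
    (fun _ => coneWeight_nonneg) fun _ => timeDeriv_coneWeight_le hv ht.2.le

lemma energyDensity_eq_zero_of_mem_backward_cone {t₀ τ t v : ℝ} {x₀ x : E}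
    (hc : ContDiff ℝ 1 c) (hc_nonneg : ∀ t, 0 ≤ t → 0 ≤ c t) (hc_anti : AntitoneOn c (Ici 0))
    (hγ : ∀ t, 0 ≤ t → 0 ≤ γ t) (hf : Continuous f) (hF : ∀ s, 0 ≤ pot f s)
    (hφ : ContDiff ℝ 2 (uncurry φ)) (hwave : IsDampedWave c γ f φ)
    (ht₀ : 0 ≤ t₀) (hcv : c t₀ ≤ v)
    (hdata : ∀ y, ‖y - x₀‖ < v * (τ - t₀) → energyDensity c f φ t₀ y = 0)
    (ht : t ∈ Icc t₀ τ) (hx : ‖x - x₀‖ < v * (τ - t)) :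
    energyDensity c f φ t x = 0 := by
  borelize E
  have hradius : 0 ≤ v * (τ - t₀) :=
    mul_nonneg ((hc_nonneg t₀ ht₀).trans hcv) (sub_nonneg.2 (ht.1.trans ht.2))
  have hinitial (y : E) : coneWeight v τ x₀ t₀ y * energyDensity c f φ t₀ y = 0 := by
    rcases lt_or_ge ‖y - x₀‖ (v * (τ - t₀)) with hy | hy
    · rw [hdata y hy, mul_zero]
    · rw [coneWeight_eq_zero (by rwa [abs_of_nonneg hradius]), zero_mul]
  have hle := antitoneOn_integral_coneWeight_mul_energyDensity (μ := volume) hc hc_nonneg hc_anti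
    hγ hf hF hφ hwave ht₀ hcv x₀ (left_mem_Icc.2 (ht.1.trans ht.2)) ht ht.1
  simp only [hinitial, integral_zero] at hle
  by_contra hne
  refine hle.not_gt (Continuous.integral_pos_of_hasCompactSupport_nonneg_nonzero (x := x) ?_ ?_
    (fun y => mul_nonneg coneWeight_nonneg (energyDensity_nonneg hF t y))
    (mul_ne_zero (coneWeight_pos hx).ne' hne))
  · exact (contDiff_coneWeight (n := 1).continuous.uncurry_left t).mul
      ((contDiff_energyDensity hc hf hφ).continuous.uncurry_left t)
  · exact .intro (isCompact_closedBall x₀ (|v * (τ - t)| + 1)) fun y hy =>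
      mul_eq_zero_of_left (eventually_coneWeight_eq_zero.self_of_nhds y hy) _

lemma exists_pos_time_energyDensity_eq_zero_outside_ball (c f : ℝ → ℝ)
    (hφ : Continuous (uncurry φ)) (hsupp : ∀ t, 0 ≤ t → HasCompactSupport (φ t)) :
    ∃ t₀, 0 < t₀ ∧ ∃ R, ∀ x, R < ‖x‖ → energyDensity c f φ t₀ x = 0 := by
  -- Freezing `φ` at negative times extends the support hypothesis to the Baire space `ℝ`.
  have hdense := dense_setOf_eventually_uniform_support (φ := fun s => φ (max s 0))
    (fun x => (hφ.uncurry_right x).comp (continuous_id.max continuous_const))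
    fun s => hsupp _ (le_max_right s 0)
  obtain ⟨t₀, ⟨R, hR⟩, ht₀⟩ := hdense.exists_mem_open isOpen_Ioi (nonempty_Ioi (a := 0))
  refine ⟨t₀, ht₀, R, fun x hx => energyDensity_eq_zero_of_eventuallyEq_zero ?_⟩
  have htime : ∀ᶠ s in 𝓝 t₀, ∀ y, R < ‖y‖ → φ s y = 0 := by
    filter_upwards [hR, Ioi_mem_nhds ht₀] with s hs hs_pos
    rwa [max_eq_left (mem_Ioi.1 hs_pos).le] at hs
  have hspace : ∀ᶠ y in 𝓝 x, R < ‖y‖ := continuous_norm.continuousAt.eventually_const_lt hx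
  filter_upwards [htime.prod_nhds hspace] with z hz using hz.1 z.2 hz.2

lemma eventually_energyDensity_eq_zero_outside_cone {v : ℝ}
    (hc : ContDiff ℝ 1 c) (hc_nonneg : ∀ t, 0 ≤ t → 0 ≤ c t) (hc_anti : AntitoneOn c (Ici 0))
    (hγ : ∀ t, 0 ≤ t → 0 ≤ γ t) (hf : Continuous f) (hF : ∀ s, 0 ≤ pot f s)
    (hφ : ContDiff ℝ 2 (uncurry φ)) (hwave : IsDampedWave c γ f φ)
    (hv : c 0 < v) (hsupp : ∀ t, 0 ≤ t → HasCompactSupport (φ t)) :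
    ∀ᶠ t in atTop, ∀ x, v * t < ‖x‖ → energyDensity c f φ t x = 0 := by
  obtain ⟨w, hcw, hwv⟩ := exists_between hv
  obtain ⟨t₀, ht₀, R, hR⟩ :=
    exists_pos_time_energyDensity_eq_zero_outside_ball c f hφ.continuous hsupp
  have hw : 0 < w := (hc_nonneg 0 le_rfl).trans_lt hcw
  have hgap : Tendsto (fun t => (v - w) * t) atTop atTop :=
    tendsto_id.const_mul_atTop (sub_pos.2 hwv)
  filter_upwards [hgap.eventually_ge_atTop (R + w), eventually_ge_atTop t₀] with t hgap_t ht x hx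
  refine energyDensity_eq_zero_of_mem_backward_cone (v := w) (τ := t + 1) (x₀ := x) hc hc_nonneg
    hc_anti hγ hf hF hφ hwave ht₀.le ((hc_anti self_mem_Ici ht₀.le ht₀.le).trans hcw.le)
    (fun y hy => hR y ?_) ⟨ht, by linarith⟩ (by simpa using hw)
  have htriangle : ‖x‖ ≤ ‖y‖ + ‖y - x‖ := norm_le_norm_add_norm_sub' x y |>.trans
    (by rw [norm_sub_rev])
  linarith [mul_pos hw ht₀]

theorem energy_decay_outside_lightcone_general [MeasurableSpace E] [BorelSpace E] {v : ℝ}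
    (hc : ContDiff ℝ 1 c) (hc_nonneg : ∀ t, 0 ≤ t → 0 ≤ c t) (hc_anti : AntitoneOn c (Ici 0))
    (hγ : ∀ t, 0 ≤ t → 0 ≤ γ t) (hf : Continuous f) (hF : ∀ s, 0 ≤ pot f s)
    (hφ : ContDiff ℝ 2 (uncurry φ)) (hwave : IsDampedWave c γ f φ)
    (hv : c 0 < v) (hsupp : ∀ t, 0 ≤ t → HasCompactSupport (φ t)) :
    Tendsto (fun t => ∫ x in {x | v * t < ‖x‖}, energyDensity c f φ t x) atTop (𝓝 0) := by
  refine tendsto_const_nhds.congr' ?_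
  filter_upwards [eventually_energyDensity_eq_zero_outside_cone hc hc_nonneg hc_anti hγ hf hF hφ
    hwave hv hsupp] with t ht
  exact (setIntegral_eq_zero_of_forall_eq_zero ht).symm

end FinitePropagation

section DeSitter

variable {H : ℝ} {f : ℝ → ℝ} {φ : ℝ → E3 → ℝ}

lemma antitone_exp_neg_mul (hH : 0 ≤ H) : Antitone fun t => Real.exp (-H * t) :=
  fun _ _ hst => Real.exp_le_exp.2 (mul_le_mul_of_nonpos_left hst (neg_nonpos.2 hH))

lemma isDampedWave_of_deSitter_kleinGordon (hφ : ContDiff ℝ 2 (uncurry φ))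
    (heq : ∀ t : ℝ, 0 ≤ t → ∀ x : E3,
      dt2 φ t x + 3 * H * dt1 φ t x - Real.exp (-2 * H * t) * lap (φ t) x + f (φ t x) = 0) :
    IsDampedWave (fun t => Real.exp (-H * t)) (fun _ => 3 * H) f φ := by
  intro t ht x
  have hspeed : Real.exp (-H * t) ^ 2 = Real.exp (-2 * H * t) := by
    rw [← Real.exp_nat_mul]; ring_nf
  rw [hspeed, ← lap_eq_laplacian (contDiff_spaceSlice hφ t)]
  exact heq t ht x

lemma energyDensity_exp_neg (t : ℝ) (x : E3) :
    energyDensity (fun t => Real.exp (-H * t)) f φ t x =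
      dt1 φ t x ^ 2 / 2 + ‖∇ (φ t) x‖ ^ 2 / (2 * Real.exp (2 * H * t)) + pot f (φ t x) := by
  have hspeed : Real.exp (-H * t) ^ 2 = (Real.exp (2 * H * t))⁻¹ := by
    rw [← Real.exp_nat_mul, ← Real.exp_neg]; ring_nf
  simp only [energyDensity, hspeed, dt1, timeDeriv]
  field_simp

end DeSitter

/-- For the de Sitter Klein–Gordon equation with `H > 0`, nonnegative
potential `F`, and a global radial spatially compactly supported `C²` solution, the energy
decays to zero outside the forward light cone `{|x| > (1+b)t}` for every `b > 1`. -/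
theorem energy_decay_outside_lightcone
    (H : ℝ) (hH : 0 < H)
    (f : ℝ → ℝ) (hf : Continuous f) (hf0 : f 0 = 0)
    (hFpos : ∀ s : ℝ, 0 ≤ pot f s)
    (φ : ℝ → E3 → ℝ)
    (hreg : ContDiff ℝ 2 (Function.uncurry φ))
    (heq : ∀ t : ℝ, 0 ≤ t → ∀ x : E3,
      dt2 φ t x + 3 * H * dt1 φ t x - Real.exp (-2 * H * t) * lap (φ t) x + f (φ t x) = 0)
    (hrad : ∀ t : ℝ, ∀ x y : E3, ‖x‖ = ‖y‖ → φ t x = φ t y)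
    (hsupp : ∀ t : ℝ, HasCompactSupport (φ t)) :
    ∀ b : ℝ, 1 < b →
      Tendsto (fun t : ℝ => ∫ x in {x : E3 | (1 + b) * t < ‖x‖},
          ((dt1 φ t x) ^ 2 / 2 + ‖gradient (φ t) x‖ ^ 2 / (2 * Real.exp (2 * H * t))
            + pot f (φ t x)))
        atTop (nhds 0) := by
  intro b hb
  simpa only [energyDensity_exp_neg] using
    energy_decay_outside_lightcone_general (c := fun t => Real.exp (-H * t)) (v := 1 + b)
      (by fun_prop) (fun t _ => (Real.exp_pos _).le) ((antitone_exp_neg_mul hH.le).antitoneOn _)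
      (fun _ _ => by positivity) hf hFpos hreg (isDampedWave_of_deSitter_kleinGordon hreg heq)
      (by simpa using one_pos.trans hb) fun t _ => hsupp t

end
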